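/- Let g : ℝ^d → Y be a measurable function into a finite label set Y, let σ > 0, and define the randomized classifier M(X) as the distribution of g(X + z) with z ∼ N(0, σ²I_d). Let X ∈ ℝ^d, y₊ ∈ Y, and p₊, p₋ ∈ (0,1) satisfy P(M(X) = y₊) ≥ p₊ ≥ p₋ ≥ max_{y ≠ y₊} P(M(X) = y). Set r^∞_X = (σ/(2√d))(Φ⁻¹(p₊) − Φ⁻¹(p₋)). Then for every e ∈ ℝ^d with ‖e‖_∞ ≤ r^∞_X and every y ∈ Y, P(g(X + e + z) = y₊) ≥ P(g(X + e + z) = y). -/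

import Mathlib

open MeasureTheory ProbabilityTheory Real
open scoped NNReal ENNReal

/-- Standard normal CDF Φ. -/
noncomputable def Phi (x : ℝ) : ℝ := ((gaussianReal 0 1) (Set.Iic x)).toReal

/-- Inverse of the standard normal CDF, Φ⁻¹. -/
noncomputable def PhiInv (q : ℝ) : ℝ := Function.invFun Phi q

/-- The trade-off function of the Gaussian mechanism, `G_μ(α) = Φ(Φ⁻¹(1-α) − μ)`. -/
noncomputable def Gmu (μ α : ℝ) : ℝ := Phi (PhiInv (1 - α) - μ)

/-- Euclidean (L2) norm on `ℝ^n`. -/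
noncomputable def l2norm {n : ℕ} (x : Fin n → ℝ) : ℝ := Real.sqrt (∑ i, (x i) ^ 2)

/-- Maximum (L∞) norm on `ℝ^n`. -/
noncomputable def linftyNorm {n : ℕ} (x : Fin n → ℝ) : ℝ := ⨆ i, |x i|

/-- Lp norm on `ℝ^n`. -/
noncomputable def lpNorm {n : ℕ} (p : ℝ) (x : Fin n → ℝ) : ℝ := (∑ i, |x i| ^ p) ^ (1 / p)

/-- `T(P,Q) ≥ f`: every measurable `[0,1]`-valued test `φ` has type II error
`1 − ∫ φ dQ` at least `f` of its level `∫ φ dP`. -/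
def TradeoffGE {Ω : Type*} [MeasurableSpace Ω] (P Q : Measure Ω) (f : ℝ → ℝ) : Prop :=
  ∀ φ : Ω → ℝ, Measurable φ → (∀ ω, φ ω ∈ Set.Icc (0 : ℝ) 1) →
    1 - ∫ ω, φ ω ∂Q ≥ f (∫ ω, φ ω ∂P)

/-- The Gaussian measure `N(v, s·I_d)` on `ℝ^d` (spherical covariance `s ≥ 0`). -/
noncomputable def gaussPi (d : ℕ) (v : Fin d → ℝ) (s : ℝ≥0) : Measure (Fin d → ℝ) :=
  Measure.pi fun i => gaussianReal (v i) s

/-!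
Under `N(w, σ²I)` the likelihood ratio against `N(v, σ²I)` is an increasing function of the linear
form `z ↦ (w - v) ⬝ᵥ z`, so by the Neyman–Pearson lemma a half-space orthogonal to `w - v` has the
smallest `N(w, σ²I)`-mass among all sets of at least its `N(v, σ²I)`-mass. For half-spaces both
masses are explicit: a mass `Φ(a)` becomes `Φ(a - ‖w - v‖₂ / σ)`. Hence moving the mean from `X` to
`X + e` keeps the mass of the region labelled `y₊` above `Φ(Φ⁻¹(p₊) - ‖e‖₂ / σ)` and, passing to
complements, that of every other region below `Φ(Φ⁻¹(p₋) + ‖e‖₂ / σ)`. These bounds do not cross as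
long as `‖e‖₂ ≤ (σ / 2)(Φ⁻¹(p₊) - Φ⁻¹(p₋))`, and `‖e‖₂ ≤ √d ‖e‖_∞`.
-/

section Phi

lemma continuous_cdf (μ : Measure ℝ) [IsProbabilityMeasure μ] [NullSingletonClass μ] :
    Continuous (cdf μ) := by
  refine continuous_iff_continuousAt.2 fun x => ?_
  rw [(monotone_cdf μ).continuousAt_iff_leftLim_eq_rightLim, StieltjesFunction.rightLim_eq]
  have hjump : ENNReal.ofReal (cdf μ x - Function.leftLim (cdf μ) x) = 0 := by
    rw [← StieltjesFunction.measure_singleton, measure_cdf, measure_singleton]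
  exact ((monotone_cdf μ).leftLim_le le_rfl).antisymm
    (sub_nonpos.1 (ENNReal.ofReal_eq_zero.1 hjump))

lemma Phi_eq_cdf : Phi = cdf (gaussianReal 0 1) := by
  ext x
  rw [cdf_eq_real]
  rfl

lemma Phi_mono : Monotone Phi := by
  rw [Phi_eq_cdf]
  exact monotone_cdf _

lemma Phi_neg (x : ℝ) : Phi (-x) = 1 - Phi x := by
  have := nullSingletonClass_gaussianReal (μ := 0) (v := 1) one_ne_zero
  have hsymm : (gaussianReal 0 1).real (Set.Iic (-x)) = (gaussianReal 0 1).real (Set.Ici x) := by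
    conv_lhs => rw [← neg_zero, ← gaussianReal_map_neg]
    rw [map_measureReal_apply measurable_neg measurableSet_Iic, Set.neg_preimage, Set.neg_Iic,
      neg_neg]
  calc Phi (-x) = (gaussianReal 0 1).real (Set.Ioi x) := by
        rw [measureReal_congr Ioi_ae_eq_Ici, ← hsymm]
        rfl
    _ = 1 - Phi x := by
        rw [← Set.compl_Iic, probReal_compl_eq_one_sub measurableSet_Iic]
        rfl

lemma Phi_PhiInv {q : ℝ} (hq : q ∈ Set.Ioo (0 : ℝ) 1) : Phi (PhiInv q) = q := by
  have := nullSingletonClass_gaussianReal (μ := 0) (v := 1) one_ne_zero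
  obtain ⟨a, ha⟩ := ((tendsto_cdf_atBot (gaussianReal 0 1)).eventually_lt_const hq.1).exists
  obtain ⟨b, hb⟩ := ((tendsto_cdf_atTop (gaussianReal 0 1)).eventually_const_lt hq.2).exists
  apply Function.invFun_eq
  rw [Phi_eq_cdf]
  exact mem_range_of_exists_le_of_exists_ge (continuous_cdf _) ⟨a, ha.le⟩ ⟨b, hb.le⟩

lemma monotoneOn_PhiInv : MonotoneOn PhiInv (Set.Ioo 0 1) := by
  intro p hp q hq hpq
  by_contra! hlt
  have hqp : q ≤ p := by simpa only [Phi_PhiInv hp, Phi_PhiInv hq] using Phi_mono hlt.le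
  exact hlt.ne (by rw [hpq.antisymm hqp])

lemma gaussianReal_real_Iic {σ : ℝ} (hσ : 0 < σ) (m b : ℝ) :
    (gaussianReal m (σ ^ 2).toNNReal).real (Set.Iic b) = Phi ((b - m) / σ) := by
  have hmap : (gaussianReal 0 1).map (fun x => σ * x + m) = gaussianReal m (σ ^ 2).toNNReal := by
    rw [← Function.comp_def (· + m) (σ * ·), ← Measure.map_map (by fun_prop) (by fun_prop),
      gaussianReal_map_const_mul, gaussianReal_map_add_const, mul_zero, zero_add, mul_one,
      Real.toNNReal_of_nonneg (sq_nonneg σ)]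
  rw [← hmap, map_measureReal_apply (by fun_prop) measurableSet_Iic, Phi, Measure.real]
  congr 2
  ext x
  simp only [Set.mem_preimage, Set.mem_Iic]
  rw [le_div_iff₀ hσ, le_sub_iff_add_le, mul_comm]

end Phi

section Norms

open scoped Matrix

variable {d : ℕ} (e : Fin d → ℝ)

lemma l2norm_nonneg : 0 ≤ l2norm e := Real.sqrt_nonneg _

lemma l2norm_sq : l2norm e ^ 2 = e ⬝ᵥ e := by
  rw [l2norm, Real.sq_sqrt (Finset.sum_nonneg fun i _ => sq_nonneg _)]
  simp only [dotProduct, sq]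

lemma l2norm_eq_zero : l2norm e = 0 ↔ e = 0 := by
  rw [← dotProduct_self_eq_zero, ← l2norm_sq, sq_eq_zero_iff]

lemma l2norm_le_sqrt_mul_linftyNorm : l2norm e ≤ √d * linftyNorm e := by
  have hnonneg : 0 ≤ linftyNorm e := Real.iSup_nonneg fun i => abs_nonneg _
  refine Real.sqrt_le_iff.2 ⟨by positivity, ?_⟩
  calc ∑ i, e i ^ 2 ≤ ∑ _i : Fin d, linftyNorm e ^ 2 := by
        gcongr ∑ i, ?_ with i
        rw [← sq_abs]
        gcongr
        exact le_ciSup (f := (|e ·|)) (Set.finite_range _).bddAbove i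
    _ = (√d * linftyNorm e) ^ 2 := by
        rw [mul_pow, Real.sq_sqrt d.cast_nonneg, Finset.sum_const, Finset.card_univ,
          Fintype.card_fin, nsmul_eq_mul]

variable {e} in
lemma l2norm_le_of_linftyNorm_le {c D : ℝ} (hc : 0 ≤ c) (hD : 0 ≤ D)
    (he : linftyNorm e ≤ c / (2 * √d) * D) : l2norm e ≤ c / 2 * D := by
  calc l2norm e ≤ √d * linftyNorm e := l2norm_le_sqrt_mul_linftyNorm e
    _ ≤ √d * (c / (2 * √d) * D) := by gcongr
    _ = √d / √d * (c / 2 * D) := by ring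
    -- only an inequality, since `√d / √d = 0` when `d = 0`
    _ ≤ c / 2 * D := mul_le_of_le_one_left (by positivity) (div_self_le_one _)

end Norms

section LikelihoodRatio

lemma neymanPearson {Ω : Type*} [MeasurableSpace Ω] {μ : Measure Ω} {f : Ω → ℝ≥0∞} {k : ℝ≥0∞}
    {H A : Set Ω} (hH : MeasurableSet H) (hA : MeasurableSet A) (hμH : μ H ≠ ∞)
    (hf_le : ∀ ω ∈ H, f ω ≤ k) (hle_f : ∀ ω ∉ H, k ≤ f ω) (hHA : μ H ≤ μ A) :
    μ.withDensity f H ≤ μ.withDensity f A := by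
  have hdiff : μ (H \ A) ≤ μ (A \ H) := by
    rw [← measure_inter_add_sdiff H hA, ← measure_inter_add_sdiff A hH, Set.inter_comm A] at hHA
    exact (ENNReal.add_le_add_iff_left (measure_ne_top_of_subset Set.inter_subset_left hμH)).1 hHA
  rw [← measure_inter_add_sdiff H hA, ← measure_inter_add_sdiff A hH, Set.inter_comm A]
  gcongr _ + ?_
  calc μ.withDensity f (H \ A) ≤ k * μ (H \ A) := by
        rw [withDensity_apply _ (hH.diff hA), ← setLIntegral_const]
        exact setLIntegral_mono measurable_const fun ω hω => hf_le ω hω.1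
    _ ≤ k * μ (A \ H) := by gcongr
    _ ≤ μ.withDensity f (A \ H) := by
        rw [withDensity_apply _ (hA.diff hH), ← setLIntegral_const]
        exact setLIntegral_mono' (hA.diff hH) fun ω hω => hle_f ω hω.2

lemma pi_withDensity {ι : Type*} [Fintype ι] {Ω : ι → Type*} [∀ i, MeasurableSpace (Ω i)]
    (μ : ∀ i, Measure (Ω i)) [∀ i, IsProbabilityMeasure (μ i)] {f : ∀ i, Ω i → ℝ≥0∞}
    (hf : ∀ i, Measurable (f i)) [∀ i, SigmaFinite ((μ i).withDensity (f i))] :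
    Measure.pi (fun i => (μ i).withDensity (f i)) =
      (Measure.pi μ).withDensity fun x => ∏ i, f i (x i) := by
  classical
  refine Measure.pi_eq fun s hs => ?_
  have hmeas (i : ι) : Measurable ((s i).indicator (f i)) := (hf i).indicator (hs i)
  have hindicator (x : ∀ i, Ω i) : (Set.univ.pi s).indicator (fun x => ∏ i, f i (x i)) x =
      ∏ i, (s i).indicator (f i) (x i) := by
    simp only [Set.indicator_apply, Finset.prod_ite_zero, Set.mem_univ_pi, Finset.mem_univ,
      forall_const]
  calc (Measure.pi μ).withDensity (fun x => ∏ i, f i (x i)) (Set.univ.pi s)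
      = ∫⁻ x, ∏ i, (s i).indicator (f i) (x i) ∂Measure.pi μ := by
        rw [withDensity_apply _ (.univ_pi hs), ← lintegral_indicator (.univ_pi hs)]
        simp_rw [hindicator]
    _ = ∏ i, ∫⁻ x, (s i).indicator (f i) (x i) ∂Measure.pi μ :=
        lintegral_prod_eq_prod_lintegral_of_indepFun _ _
          (iIndepFun_pi fun i => (hmeas i).aemeasurable)
          fun i => (hmeas i).comp (measurable_pi_apply i)
    _ = ∏ i, (μ i).withDensity (f i) (s i) := by
        refine Finset.prod_congr rfl fun i _ => ?_
        rw [(measurePreserving_eval μ i).lintegral_comp (hmeas i), lintegral_indicator (hs i),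
          withDensity_apply _ (hs i)]

lemma gaussianReal_eq_withDensity_gaussianReal (a b : ℝ) {v : ℝ≥0} (hv : v ≠ 0) :
    gaussianReal b v = (gaussianReal a v).withDensity fun x =>
      ENNReal.ofReal (rexp (((b - a) * x - (b * b - a * a) / 2) / v)) := by
  have hv' : (v : ℝ) ≠ 0 := NNReal.coe_ne_zero.2 hv
  rw [gaussianReal_of_var_ne_zero _ hv, gaussianReal_of_var_ne_zero _ hv,
    ← withDensity_mul _ (measurable_gaussianPDF _ _) (by fun_prop)]
  congr 1
  ext x
  rw [Pi.mul_apply, gaussianPDF, gaussianPDF, ← ENNReal.ofReal_mul (gaussianPDFReal_nonneg _ _ _),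
    gaussianPDFReal, gaussianPDFReal, mul_assoc _ (rexp _), ← Real.exp_add]
  congr 3
  field_simp
  ring

end LikelihoodRatio

section GaussPi

open scoped Matrix

variable {d : ℕ}

instance isProbabilityMeasure_gaussPi (v : Fin d → ℝ) (s : ℝ≥0) :
    IsProbabilityMeasure (gaussPi d v s) := by
  unfold gaussPi
  infer_instance

lemma gaussPi_map_const_add (v e : Fin d → ℝ) (s : ℝ≥0) :
    (gaussPi d v s).map (e + ·) = gaussPi d (v + e) s := by
  rw [gaussPi, gaussPi]
  simp_rw [Pi.add_apply, ← gaussianReal_map_const_add]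
  exact Measure.pi_map_pi fun i => (measurable_const_add (e i)).aemeasurable

lemma pi_gaussianReal_map_sum {ι : Type*} [Fintype ι] (m : ι → ℝ) (v : ι → ℝ≥0) :
    (Measure.pi fun i => gaussianReal (m i) (v i)).map (fun z => ∑ i, z i) =
      gaussianReal (∑ i, m i) (∑ i, v i) := by
  have := Measure.isProbabilityMeasure_map (μ := Measure.pi fun i => gaussianReal (m i) (v i))
    (f := fun z => ∑ i, z i) (by fun_prop)
  apply Measure.ext_of_charFun
  ext t
  rw [charFun_map_sum_pi_eq_prod, Finset.prod_apply, charFun_gaussianReal]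
  simp_rw [charFun_gaussianReal, ← Complex.exp_sum]
  push_cast
  rw [Finset.sum_sub_distrib, Finset.mul_sum, Finset.sum_mul, Finset.sum_mul, Finset.sum_div]

lemma gaussPi_map_dotProduct (e v : Fin d → ℝ) (s : ℝ≥0) :
    (gaussPi d v s).map (e ⬝ᵥ ·) = gaussianReal (e ⬝ᵥ v) ((l2norm e ^ 2).toNNReal * s) := by
  have hscale : (gaussPi d v s).map (fun z i => e i * z i) =
      Measure.pi fun i => gaussianReal (e i * v i) (.mk (e i ^ 2) (sq_nonneg _) * s) := by
    simp_rw [← gaussianReal_map_const_mul]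
    exact Measure.pi_map_pi fun i => by fun_prop
  have hvar : ∑ i, (.mk (e i ^ 2) (sq_nonneg _) * s : ℝ≥0) = (l2norm e ^ 2).toNNReal * s := by
    rw [← Finset.sum_mul]
    congr 1
    ext
    rw [Real.coe_toNNReal _ (sq_nonneg _), l2norm_sq]
    simp [dotProduct, sq]
  calc (gaussPi d v s).map (e ⬝ᵥ ·)
      = ((gaussPi d v s).map (fun z i => e i * z i)).map (fun z => ∑ i, z i) :=
        (Measure.map_map (by fun_prop) (by fun_prop)).symm
    _ = gaussianReal (e ⬝ᵥ v) ((l2norm e ^ 2).toNNReal * s) := by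
        rw [hscale, pi_gaussianReal_map_sum, hvar]
        rfl

lemma gaussPi_real_halfspace {σ : ℝ} (hσ : 0 < σ) {e : Fin d → ℝ} (he : 0 < l2norm e)
    (v : Fin d → ℝ) (b : ℝ) :
    (gaussPi d v (σ ^ 2).toNNReal).real {z | e ⬝ᵥ z ≤ b} =
      Phi ((b - e ⬝ᵥ v) / (l2norm e * σ)) := by
  rw [← gaussianReal_real_Iic (by positivity), mul_pow, Real.toNNReal_mul (sq_nonneg _),
    ← gaussPi_map_dotProduct, map_measureReal_apply (by fun_prop) measurableSet_Iic]
  rfl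

lemma gaussPi_eq_withDensity_gaussPi (v w : Fin d → ℝ) {s : ℝ≥0} (hs : s ≠ 0) :
    gaussPi d w s = (gaussPi d v s).withDensity fun z =>
      ENNReal.ofReal (rexp (((w - v) ⬝ᵥ z - (w ⬝ᵥ w - v ⬝ᵥ v) / 2) / s)) := by
  have hdensity (i : Fin d) := gaussianReal_eq_withDensity_gaussianReal (v i) (w i) hs
  have (i : Fin d) : SigmaFinite ((gaussianReal (v i) s).withDensity fun x =>
      ENNReal.ofReal (rexp (((w i - v i) * x - (w i * w i - v i * v i) / 2) / s))) := by
    rw [← hdensity]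
    infer_instance
  rw [gaussPi, funext hdensity, pi_withDensity _ fun i => by fun_prop, gaussPi]
  congr 1
  ext z
  rw [← ENNReal.ofReal_prod_of_nonneg fun _ _ => (Real.exp_pos _).le, ← Real.exp_sum,
    ← Finset.sum_div, Finset.sum_sub_distrib, ← Finset.sum_div, Finset.sum_sub_distrib]
  rfl

lemma gaussPi_real_halfspace_le (v w : Fin d → ℝ) {s : ℝ≥0} (hs : s ≠ 0) (b : ℝ)
    {A : Set (Fin d → ℝ)} (hA : MeasurableSet A)
    (h : (gaussPi d v s).real {z | (w - v) ⬝ᵥ z ≤ b} ≤ (gaussPi d v s).real A) :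
    (gaussPi d w s).real {z | (w - v) ⬝ᵥ z ≤ b} ≤ (gaussPi d w s).real A := by
  have hH : MeasurableSet {z | (w - v) ⬝ᵥ z ≤ b} := measurableSet_le (by fun_prop) measurable_const
  have hmass := (ENNReal.toReal_le_toReal (measure_ne_top _ _) (measure_ne_top _ _)).1 h
  refine ENNReal.toReal_mono (measure_ne_top _ _) ?_
  rw [gaussPi_eq_withDensity_gaussPi v w hs]
  refine neymanPearson (k := ENNReal.ofReal (rexp ((b - (w ⬝ᵥ w - v ⬝ᵥ v) / 2) / s))) hH hA
    (measure_ne_top _ _) ?_ ?_ hmass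
  · intro z (hz : (w - v) ⬝ᵥ z ≤ b)
    gcongr
  · intro z hz
    have hz : b ≤ (w - v) ⬝ᵥ z := (not_le.1 hz).le
    gcongr

lemma Phi_sub_le_gaussPi_real {σ : ℝ} (hσ : 0 < σ) (v w : Fin d → ℝ) {A : Set (Fin d → ℝ)}
    (hA : MeasurableSet A) {a : ℝ} (h : Phi a ≤ (gaussPi d v (σ ^ 2).toNNReal).real A) :
    Phi (a - l2norm (w - v) / σ) ≤ (gaussPi d w (σ ^ 2).toNNReal).real A := by
  obtain he | he := (l2norm_nonneg (w - v)).eq_or_lt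
  · obtain rfl : w = v := sub_eq_zero.1 ((l2norm_eq_zero _).1 he.symm)
    rwa [← he, zero_div, sub_zero]
  set e := w - v with he_def
  set b := e ⬝ᵥ v + l2norm e * σ * a
  have hv : (gaussPi d v (σ ^ 2).toNNReal).real {z | e ⬝ᵥ z ≤ b} = Phi a := by
    rw [gaussPi_real_halfspace hσ he, add_sub_cancel_left, mul_div_cancel_left₀ _ (by positivity)]
  have hw : (gaussPi d w (σ ^ 2).toNNReal).real {z | e ⬝ᵥ z ≤ b} = Phi (a - l2norm e / σ) := by
    have hew : e ⬝ᵥ w = e ⬝ᵥ v + l2norm e ^ 2 := by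
      rw [l2norm_sq, ← dotProduct_add, he_def, add_sub_cancel]
    rw [gaussPi_real_halfspace hσ he, hew]
    congr 1
    field_simp
    ring
  rw [← hw]
  exact gaussPi_real_halfspace_le v w (Real.toNNReal_pos.2 (by positivity)).ne' b hA (hv.trans_le h)

lemma gaussPi_real_le_Phi_add {σ : ℝ} (hσ : 0 < σ) (v w : Fin d → ℝ) {B : Set (Fin d → ℝ)}
    (hB : MeasurableSet B) {b : ℝ} (h : (gaussPi d v (σ ^ 2).toNNReal).real B ≤ Phi b) :
    (gaussPi d w (σ ^ 2).toNNReal).real B ≤ Phi (b + l2norm (w - v) / σ) := by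
  have hcompl := Phi_sub_le_gaussPi_real hσ v w hB.compl (a := -b) (by
    rw [Phi_neg, probReal_compl_eq_one_sub hB]
    gcongr)
  rwa [← neg_add', Phi_neg, probReal_compl_eq_one_sub hB, sub_le_sub_iff_left] at hcompl

lemma gaussPi_real_le_of_l2norm_sub_le {σ : ℝ} (hσ : 0 < σ) {v w : Fin d → ℝ}
    {A B : Set (Fin d → ℝ)} (hA : MeasurableSet A) (hB : MeasurableSet B) {p q : ℝ}
    (hp : p ∈ Set.Ioo (0 : ℝ) 1) (hq : q ∈ Set.Ioo (0 : ℝ) 1)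
    (hpA : p ≤ (gaussPi d v (σ ^ 2).toNNReal).real A)
    (hBq : (gaussPi d v (σ ^ 2).toNNReal).real B ≤ q)
    (hvw : l2norm (w - v) ≤ σ / 2 * (PhiInv p - PhiInv q)) :
    (gaussPi d w (σ ^ 2).toNNReal).real B ≤ (gaussPi d w (σ ^ 2).toNNReal).real A := by
  have hgap : PhiInv q + l2norm (w - v) / σ ≤ PhiInv p - l2norm (w - v) / σ := by
    have hdiv : l2norm (w - v) / σ ≤ (PhiInv p - PhiInv q) / 2 := by
      rw [div_le_iff₀ hσ]
      linarith
    linarith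
  calc (gaussPi d w (σ ^ 2).toNNReal).real B ≤ Phi (PhiInv q + l2norm (w - v) / σ) :=
        gaussPi_real_le_Phi_add hσ v w hB (by rwa [Phi_PhiInv hq])
    _ ≤ Phi (PhiInv p - l2norm (w - v) / σ) := Phi_mono hgap
    _ ≤ (gaussPi d w (σ ^ 2).toNNReal).real A :=
        Phi_sub_le_gaussPi_real hσ v w hA (by rwa [Phi_PhiInv hp])

end GaussPi

theorem rs_certificate_linfty_general {d : ℕ} {Y : Type*} [MeasurableSpace Y]
    [MeasurableSingletonClass Y]
    (g : (Fin d → ℝ) → Y) (hg : Measurable g) (σ : ℝ) (hσ : 0 < σ)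
    (X : Fin d → ℝ) (yPlus : Y) (pPlus pMinus : ℝ)
    (hpPlus : pPlus ∈ Set.Ioo (0 : ℝ) 1) (hpMinus : pMinus ∈ Set.Ioo (0 : ℝ) 1)
    (hplus : ((gaussPi d 0 (σ ^ 2).toNNReal) {z | g (X + z) = yPlus}).toReal ≥ pPlus)
    (horder : pPlus ≥ pMinus)
    (hminus : ∀ y : Y, y ≠ yPlus →
      ((gaussPi d 0 (σ ^ 2).toNNReal) {z | g (X + z) = y}).toReal ≤ pMinus) :
    ∀ e : Fin d → ℝ,
      linftyNorm e ≤ σ / (2 * Real.sqrt d) * (PhiInv pPlus - PhiInv pMinus) → ∀ y : Y,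
      ((gaussPi d 0 (σ ^ 2).toNNReal) {z | g (X + e + z) = yPlus}).toReal ≥
        ((gaussPi d 0 (σ ^ 2).toNNReal) {z | g (X + e + z) = y}).toReal := by
  intro e he y
  obtain rfl | hy := eq_or_ne y yPlus
  · exact le_rfl
  have hlabel (y : Y) : MeasurableSet (g ⁻¹' {y}) := hg (measurableSet_singleton y)
  have htranslate (v : Fin d → ℝ) (y : Y) :
      ((gaussPi d 0 (σ ^ 2).toNNReal) {z | g (v + z) = y}).toReal =
        (gaussPi d v (σ ^ 2).toNNReal).real (g ⁻¹' {y}) := by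
    rw [← zero_add v, ← gaussPi_map_const_add,
      map_measureReal_apply (measurable_const_add v) (hlabel y), zero_add]
    rfl
  have hgap : 0 ≤ PhiInv pPlus - PhiInv pMinus :=
    sub_nonneg.2 (monotoneOn_PhiInv hpMinus hpPlus horder)
  have hdist : l2norm (X + e - X) ≤ σ / 2 * (PhiInv pPlus - PhiInv pMinus) := by
    rw [add_sub_cancel_left]
    exact l2norm_le_of_linftyNorm_le hσ.le hgap he
  simp_rw [htranslate] at hplus hminus ⊢
  exact gaussPi_real_le_of_l2norm_sub_le hσ (hlabel yPlus) (hlabel y) hpPlus hpMinus hplus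
    (hminus y hy) hdist

/-- **Randomized smoothing certificate (L∞ via the `√d` bound).**
For a measurable base classifier `g : ℝ^d → Y` smoothed with Gaussian noise `N(0, σ²I_d)`,
if `P(g(X+z) = y₊) ≥ p₊ ≥ p₋ ≥ max_{y ≠ y₊} P(g(X+z) = y)` then for every perturbation `e`
with `‖e‖_∞ ≤ (σ/(2√d))(Φ⁻¹(p₊) − Φ⁻¹(p₋))`, `y₊` remains a most probable class of the
smoothed classifier at `X + e`. -/
theorem rs_certificate_linfty {d : ℕ} {Y : Type*} [Fintype Y] [MeasurableSpace Y]
    [MeasurableSingletonClass Y]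
    (g : (Fin d → ℝ) → Y) (hg : Measurable g) (σ : ℝ) (hσ : 0 < σ)
    (X : Fin d → ℝ) (yPlus : Y) (pPlus pMinus : ℝ)
    (hpPlus : pPlus ∈ Set.Ioo (0 : ℝ) 1) (hpMinus : pMinus ∈ Set.Ioo (0 : ℝ) 1)
    (hplus : ((gaussPi d 0 (σ ^ 2).toNNReal) {z | g (X + z) = yPlus}).toReal ≥ pPlus)
    (horder : pPlus ≥ pMinus)
    (hminus : ∀ y : Y, y ≠ yPlus →
      ((gaussPi d 0 (σ ^ 2).toNNReal) {z | g (X + z) = y}).toReal ≤ pMinus) :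
    ∀ e : Fin d → ℝ,
      linftyNorm e ≤ σ / (2 * Real.sqrt d) * (PhiInv pPlus - PhiInv pMinus) → ∀ y : Y,
      ((gaussPi d 0 (σ ^ 2).toNNReal) {z | g (X + e + z) = yPlus}).toReal ≥
        ((gaussPi d 0 (σ ^ 2).toNNReal) {z | g (X + e + z) = y}).toReal :=
  rs_certificate_linfty_general g hg σ hσ X yPlus pPlus pMinus hpPlus hpMinus hplus horder hminus
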